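/- Run expansion relates Memo to Match (Lemma 6): For every NFA A = (Q, q0, F, T) without ε-loops, every input string w over Σ, and every position i ∈ {0, …, |w|}, if s is the run of Match_{A,w}(q0, i) and s' is the run of Memo^{M0}_{A,w}(q0, i), then s = sub*(s'). -/

import Mathlib

namespace RegexMemo

/-! ## Generic runs, `φ`, `sub`, `sub*` -/

variable {α : Type}

/-- `φ_s(ℓ, n)`: the index of the result value of the call at index `ℓ`. -/
def phiAux (isRet : α → Bool) (s : List α) (ℓ n : ℕ) : Option ℕ :=
  match h : s[ℓ]? with
  | none => none
  | some e =>
    if isRet e then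
      if n ≤ 1 then some ℓ
      else phiAux isRet s (ℓ + 1) (n - 1)
    else phiAux isRet s (ℓ + 1) (n + 1)
termination_by s.length - ℓ
decreasing_by
  all_goals
    have hl : ℓ < s.length := by
      by_contra hc
      have : s[ℓ]? = none := List.getElem?_eq_none (by omega)
      simp [this] at h
    omega

/-- `φ_s(ℓ) = φ_s(ℓ, 0)`. -/
def phi (isRet : α → Bool) (s : List α) (ℓ : ℕ) : Option ℕ := phiAux isRet s ℓ 0

/-- `sub(s, ℓ)`: replace the memoization-table invocation at index `ℓ` (an element
`M(q,i)` together with its immediately following result) by `C(q,i)` followed by the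
subsequence `s[ℓ'+1] … s[φ_s(ℓ')]`, where `ℓ'` is the first index with `s[ℓ'] = C(q,i)`.
Here `m2c` maps a memoization element `M(q,i)` to the corresponding call element `C(q,i)`
(and everything else to `none`), and `isRet` recognizes result elements. -/
def subExpand [DecidableEq α] (m2c : α → Option α) (isRet : α → Bool)
    (s : List α) (ℓ : ℕ) : Option (List α) :=
  match s[ℓ]? with
  | some e =>
    match m2c e with
    | some c =>
      match s.findIdx? (· == c) with
      | some ℓ' =>
        match phi isRet s ℓ' with
        | some m =>
          some (s.take ℓ ++ [c] ++ ((s.drop (ℓ' + 1)).take (m - ℓ')) ++ s.drop (ℓ + 2))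
        | none => none
      | none => none
    | none => none
  | none => none

/-- `sub*`: repeatedly locate the first memoization element and expand it,
until no memoization element remains. `SubStar m2c isRet s t` means `sub*(s) = t`. -/
inductive SubStar [DecidableEq α] (m2c : α → Option α) (isRet : α → Bool) :
    List α → List α → Prop where
  | done {s : List α} : s.findIdx? (fun e => (m2c e).isSome) = none →
      SubStar m2c isRet s s
  | step {s s' t : List α} {ℓ : ℕ} :
      s.findIdx? (fun e => (m2c e).isSome) = some ℓ →
      subExpand m2c isRet s ℓ = some s' →
      SubStar m2c isRet s' t →
      SubStar m2c isRet s t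

/-- The number of (recursive) calls recorded in a run: the number of `C`/`M` elements. -/
def callCount (isCall : α → Bool) (s : List α) : ℕ := (s.filter isCall).length

variable {Sigma S : Type}

/-- Results of backtracking matching: `SuccessAt i'` or `Failure`. -/
inductive Result : Type where
  | successAt : ℕ → Result
  | failure : Result
deriving DecidableEq

/-! ## Plain NFAs -/

/-- Transitions of a plain NFA. -/
inductive Trans (Sigma S : Type) : Type where
  | eps : S → Trans Sigma S
  | branch : S → S → Trans Sigma S
  | char : Sigma → S → Trans Sigma S

/-- A (plain) NFA over the alphabet `Sigma` with (finite) state type `S`: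
an initial state, a set of accepting states, and a transition function
(whose value is only relevant on non-accepting states). -/
structure NFA (Sigma S : Type) where
  q0 : S
  F : Set S
  T : S → Trans Sigma S

/-- One ε-step: an `Eps` or `Branch` transition of a non-accepting state. -/
def NFA.epsStep (A : NFA Sigma S) (q q' : S) : Prop :=
  q ∉ A.F ∧ (A.T q = Trans.eps q' ∨ (∃ q'', A.T q = Trans.branch q' q'') ∨
    (∃ q'', A.T q = Trans.branch q'' q'))

/-- The NFA has no ε-loops. -/
def NFA.NoEpsLoops (A : NFA Sigma S) : Prop :=
  ∀ q : S, ¬ Relation.TransGen A.epsStep q q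

open Classical in
/-- The in-degree `#in(q)` of a state of a plain NFA. -/
noncomputable def NFA.inDeg [Fintype S] (A : NFA Sigma S) (q : S) : ℕ :=
  (Finset.univ.filter fun q' : S => q' ∉ A.F ∧ A.T q' = Trans.eps q).card +
  (Finset.univ.filter fun q' : S => q' ∉ A.F ∧ ∃ σ, A.T q' = Trans.char σ q).card +
  (Finset.univ.filter fun q' : S => q' ∉ A.F ∧ ∃ q'', A.T q' = Trans.branch q q'').card +
  (Finset.univ.filter fun q' : S => q' ∉ A.F ∧ ∃ q'', A.T q' = Trans.branch q'' q).card +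
  (if q = A.q0 then 1 else 0)

/-- The maximal in-degree `#in(A)` of a plain NFA. -/
noncomputable def NFA.inDegMax [Fintype S] (A : NFA Sigma S) : ℕ :=
  Finset.univ.sup fun q : S => A.inDeg q

/-- Elements of runs of `Match`/`Memo`: calls `C(q,i)`, memoization-table invocations
`M(q,i)`, and results `S(i')` and `F`. -/
inductive RunElem (S : Type) : Type where
  | call : S → ℕ → RunElem S
  | memo : S → ℕ → RunElem S
  | succ : ℕ → RunElem S
  | fail : RunElem S
deriving DecidableEq

/-- The run element recording the return of a result. -/
def Result.elem {S : Type} : Result → RunElem S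
  | .successAt i => .succ i
  | .failure => .fail

def RunElem.isRet : RunElem S → Bool
  | .succ _ => true
  | .fail => true
  | _ => false

def RunElem.isCall : RunElem S → Bool
  | .call _ _ => true
  | .memo _ _ => true
  | _ => false

/-- `M(q,i) ↦ C(q,i)`. -/
def memoToCall : RunElem S → Option (RunElem S)
  | .memo q i => some (.call q i)
  | _ => none

/-- Big-step semantics (together with the produced run) of the backtracking
matching algorithm `Match` for plain NFAs:
`MatchRun A w q i r s` means the call `Match_{A,w}(q, i)` terminates with
result `r` and produces the run `s`. -/
inductive MatchRun (A : NFA Sigma S) (w : List Sigma) :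
    S → ℕ → Result → List (RunElem S) → Prop where
  | accept {q : S} {i : ℕ} : q ∈ A.F →
      MatchRun A w q i (.successAt i) [.call q i, .succ i]
  | eps {q q' : S} {i : ℕ} {r : Result} {s : List (RunElem S)} :
      q ∉ A.F → A.T q = Trans.eps q' →
      MatchRun A w q' i r s →
      MatchRun A w q i r (.call q i :: s ++ [r.elem])
  | branchSucc {q q' q'' : S} {i i' : ℕ} {s : List (RunElem S)} :
      q ∉ A.F → A.T q = Trans.branch q' q'' →
      MatchRun A w q' i (.successAt i') s →
      MatchRun A w q i (.successAt i') (.call q i :: s ++ [RunElem.succ i'])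
  | branchFail {q q' q'' : S} {i : ℕ} {r : Result} {s s' : List (RunElem S)} :
      q ∉ A.F → A.T q = Trans.branch q' q'' →
      MatchRun A w q' i .failure s →
      MatchRun A w q'' i r s' →
      MatchRun A w q i r (.call q i :: s ++ s' ++ [r.elem])
  | charSucc {q q' : S} {σ : Sigma} {i : ℕ} {r : Result} {s : List (RunElem S)} :
      q ∉ A.F → A.T q = Trans.char σ q' →
      w[i]? = some σ →
      MatchRun A w q' (i + 1) r s →
      MatchRun A w q i r (.call q i :: s ++ [r.elem])
  | charFail {q q' : S} {σ : Sigma} {i : ℕ} :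
      q ∉ A.F → A.T q = Trans.char σ q' →
      w[i]? ≠ some σ →
      MatchRun A w q i .failure [.call q i, .fail]

/-- Record `M(q,i) := Failure` in the memoization table if the result is a failure. -/
def recFail [DecidableEq S] (M : S × ℕ → Bool) (q : S) (i : ℕ) : Result → (S × ℕ → Bool)
  | .failure => fun p => if p = (q, i) then true else M p
  | _ => M

/-- Big-step semantics (with resulting memoization table and produced run) of the
memoized backtracking matching algorithm `Memo` for plain NFAs:
`MemoRun A w q i M M' r s` means the call `Memo^M_{A,w}(q, i)` terminates with result
`r`, final memoization table `M'` (where `M p = true` means `Failure` is recorded at the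
key `p`), and produces the run `s`. -/
inductive MemoRun [DecidableEq S] (A : NFA Sigma S) (w : List Sigma) :
    S → ℕ → (S × ℕ → Bool) → (S × ℕ → Bool) → Result → List (RunElem S) → Prop where
  | memoHit {q : S} {i : ℕ} {M : S × ℕ → Bool} : M (q, i) = true →
      MemoRun A w q i M M .failure [.memo q i, .fail]
  | accept {q : S} {i : ℕ} {M : S × ℕ → Bool} : M (q, i) = false → q ∈ A.F →
      MemoRun A w q i M M (.successAt i) [.call q i, .succ i]
  | eps {q q' : S} {i : ℕ} {M M' : S × ℕ → Bool} {r : Result} {s : List (RunElem S)} :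
      M (q, i) = false → q ∉ A.F → A.T q = Trans.eps q' →
      MemoRun A w q' i M M' r s →
      MemoRun A w q i M (recFail M' q i r) r (.call q i :: s ++ [r.elem])
  | branchSucc {q q' q'' : S} {i i' : ℕ} {M M' : S × ℕ → Bool} {s : List (RunElem S)} :
      M (q, i) = false → q ∉ A.F → A.T q = Trans.branch q' q'' →
      MemoRun A w q' i M M' (.successAt i') s →
      MemoRun A w q i M M' (.successAt i') (.call q i :: s ++ [RunElem.succ i'])
  | branchFail {q q' q'' : S} {i : ℕ} {M M' M'' : S × ℕ → Bool} {r : Result}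
      {s s' : List (RunElem S)} :
      M (q, i) = false → q ∉ A.F → A.T q = Trans.branch q' q'' →
      MemoRun A w q' i M M' .failure s →
      MemoRun A w q'' i M' M'' r s' →
      MemoRun A w q i M (recFail M'' q i r) r (.call q i :: s ++ s' ++ [r.elem])
  | charSucc {q q' : S} {σ : Sigma} {i : ℕ} {M M' : S × ℕ → Bool} {r : Result}
      {s : List (RunElem S)} :
      M (q, i) = false → q ∉ A.F → A.T q = Trans.char σ q' →
      w[i]? = some σ →
      MemoRun A w q' (i + 1) M M' r s →
      MemoRun A w q i M (recFail M' q i r) r (.call q i :: s ++ [r.elem])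
  | charFail {q q' : S} {σ : Sigma} {i : ℕ} {M : S × ℕ → Bool} :
      M (q, i) = false → q ∉ A.F → A.T q = Trans.char σ q' →
      w[i]? ≠ some σ →
      MemoRun A w q i M (recFail M q i .failure) .failure [.call q i, .fail]

/-! ## NFAs with sub-automata -/

/-- Kind labels of sub-automaton transitions: positive/negative look-ahead/look-behind
and atomic grouping. -/
inductive Kind : Type where
  | pla | nla | plb | nlb | at
deriving DecidableEq

mutual
/-- An NFA with sub-automata `⟨Q, q0, F, T⟩`: a list of top-level states, an initial
state, accepting states, and a transition function (relevant on non-accepting top-level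
states) whose transitions may be labelled with further NFAs with sub-automata. -/
inductive SubNFA (Sigma S : Type) : Type where
  | mk : List S → S → List S → (S → SubTrans Sigma S) → SubNFA Sigma S

/-- Transitions of an NFA with sub-automata. -/
inductive SubTrans (Sigma S : Type) : Type where
  | eps : S → SubTrans Sigma S
  | branch : S → S → SubTrans Sigma S
  | char : Sigma → S → SubTrans Sigma S
  | sub : Kind → SubNFA Sigma S → S → SubTrans Sigma S
end

/-- Top-level states `Q`. -/
def SubNFA.Q : SubNFA Sigma S → List S
  | .mk Q _ _ _ => Q

/-- Initial state `q0`. -/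
def SubNFA.q0 : SubNFA Sigma S → S
  | .mk _ q0 _ _ => q0

/-- Accepting states `F`. -/
def SubNFA.F : SubNFA Sigma S → List S
  | .mk _ _ F _ => F

/-- Transition function `T`. -/
def SubNFA.T : SubNFA Sigma S → S → SubTrans Sigma S
  | .mk _ _ _ T => T

mutual
/-- All automata occurring within an NFA with sub-automata (including itself), each
together with its nesting depth of atomic grouping (the number of enclosing
`at`-sub-automaton boundaries). -/
def SubNFA.compsD : SubNFA Sigma S → List (SubNFA Sigma S × ℕ)
  | .mk Q q0 F T => (.mk Q q0 F T, 0) :: Q.flatMap (fun q => SubTrans.subCompsD (T q))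

def SubTrans.subCompsD : SubTrans Sigma S → List (SubNFA Sigma S × ℕ)
  | .sub k A' _ => (SubNFA.compsD A').map (fun p => (p.1, p.2 + (if k = Kind.at then 1 else 0)))
  | _ => []
end

/-- All automata occurring within `A` (including `A` itself). -/
def SubNFA.comps (A : SubNFA Sigma S) : List (SubNFA Sigma S) :=
  A.compsD.map Prod.fst

/-- The set (list) of all states `P` occurring within `A`. -/
def SubNFA.allStates (A : SubNFA Sigma S) : List S :=
  A.comps.flatMap SubNFA.Q

/-- The nesting depth of atomic grouping `ν_A(q)` of a state `q` of `A`. -/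
def SubNFA.nu [DecidableEq S] (A : SubNFA Sigma S) (q : S) : ℕ :=
  (A.compsD.map (fun p => if q ∈ p.1.Q then p.2 else 0)).sum

/-- The maximal nesting depth of atomic grouping `ν(A)`. -/
def SubNFA.nuMax [DecidableEq S] (A : SubNFA Sigma S) : ℕ :=
  (A.allStates.map A.nu).foldr max 0

/-- Local wellformedness of one automaton: the initial state is a top-level state,
accepting states are top-level states, and transitions of non-accepting top-level
states lead to top-level states. -/
def SubNFA.LocalOK (B : SubNFA Sigma S) : Prop :=
  B.q0 ∈ B.Q ∧ (∀ f ∈ B.F, f ∈ B.Q) ∧ ∀ q ∈ B.Q, q ∉ B.F →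
    match B.T q with
    | .eps q' => q' ∈ B.Q
    | .branch q' q'' => q' ∈ B.Q ∧ q'' ∈ B.Q
    | .char _ q' => q' ∈ B.Q
    | .sub _ _ q' => q' ∈ B.Q

/-- Wellformedness of an NFA with sub-automata: every component automaton is locally
wellformed, and all the state lists are disjoint and duplicate-free (so that `P` is
the disjoint union of the top-level state sets of all components). -/
def SubNFA.WF (A : SubNFA Sigma S) : Prop :=
  (∀ B ∈ A.comps, B.LocalOK) ∧ A.allStates.Nodup

/-- The kind labels of all sub-automaton transitions occurring in `A`. -/
def SubNFA.kinds [DecidableEq S] (A : SubNFA Sigma S) : List Kind :=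
  A.comps.flatMap fun B =>
    (B.Q.filter (fun q => decide (q ∉ B.F))).filterMap fun q =>
      match B.T q with
      | .sub k _ _ => some k
      | _ => none

/-- A la-NFA: all kind labels are look-around labels (for simplicity, only positive
look-ahead `pla` is treated). -/
def SubNFA.IsLaNFA [DecidableEq S] (A : SubNFA Sigma S) : Prop :=
  ∀ k ∈ A.kinds, k = Kind.pla

/-- An at-NFA: all kind labels are `at` (atomic grouping). -/
def SubNFA.IsAtNFA [DecidableEq S] (A : SubNFA Sigma S) : Prop :=
  ∀ k ∈ A.kinds, k = Kind.at

/-- A (la,at)-NFA in which (for simplicity) only the kinds `pla` and `at` occur. -/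
def SubNFA.IsLaAtNFA [DecidableEq S] (A : SubNFA Sigma S) : Prop :=
  ∀ k ∈ A.kinds, k = Kind.pla ∨ k = Kind.at

/-- One global ε-step of an NFA with sub-automata: an `Eps` or `Branch` transition, or a
`Sub` transition with a look-around kind (from the transition's source to its successor),
of a non-accepting top-level state of any component automaton. -/
def SubNFA.epsStep (A : SubNFA Sigma S) (q q' : S) : Prop :=
  ∃ B ∈ A.comps, q ∈ B.Q ∧ q ∉ B.F ∧
    (B.T q = SubTrans.eps q' ∨
     (∃ q'', B.T q = SubTrans.branch q' q'') ∨
     (∃ q'', B.T q = SubTrans.branch q'' q') ∨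
     (∃ k A'', B.T q = SubTrans.sub k A'' q' ∧ k ≠ Kind.at))

/-- The NFA with sub-automata has no ε-loops. -/
def SubNFA.NoEpsLoops (A : SubNFA Sigma S) : Prop :=
  ∀ q : S, ¬ Relation.TransGen A.epsStep q q

/-- All pairs (state, transition) of non-accepting top-level states of all component
automata of `A`. -/
def SubNFA.allTransNF [DecidableEq S] (A : SubNFA Sigma S) : List (S × SubTrans Sigma S) :=
  A.comps.flatMap fun B => (B.Q.filter (fun q => decide (q ∉ B.F))).map fun q => (q, B.T q)

/-- How many of the buckets in the definition of the in-degree of `q` a given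
transition contributes to. -/
def SubTrans.hits [DecidableEq S] (t : SubTrans Sigma S) (q : S) : ℕ :=
  match t with
  | .eps q' => if q' = q then 1 else 0
  | .char _ q' => if q' = q then 1 else 0
  | .branch q' q'' => (if q' = q then 1 else 0) + (if q'' = q then 1 else 0)
  | .sub _ _ q' => if q' = q then 1 else 0

/-- The in-degree `#in(q)` of a state of an NFA with sub-automata. -/
def SubNFA.inDeg [DecidableEq S] (A : SubNFA Sigma S) (q : S) : ℕ :=
  (A.allTransNF.map (fun p => p.2.hits q)).sum +
  (if q ∈ A.comps.map SubNFA.q0 then 1 else 0)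

/-- The maximal in-degree `#in(A)`. -/
def SubNFA.inDegMax [DecidableEq S] (A : SubNFA Sigma S) : ℕ :=
  (A.allStates.map A.inDeg).foldr max 0

/-! ## run elements for `Memo-la` and `Match-(la,at)` -/

/-- Elements of runs of `Memo-la` (and of `Match-(la,at)`): calls `C(q,i)`,
memoization-table invocations `M(q,i)`, and the results `S(i')`, `S'` (bare success),
and `F`. -/
inductive LaRunElem (S : Type) : Type where
  | call : S → ℕ → LaRunElem S
  | memo : S → ℕ → LaRunElem S
  | succAt : ℕ → LaRunElem S
  | succ : LaRunElem S
  | fail : LaRunElem S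
deriving DecidableEq

def LaRunElem.isRet : LaRunElem S → Bool
  | .succAt _ => true
  | .succ => true
  | .fail => true
  | _ => false

def LaRunElem.isCall : LaRunElem S → Bool
  | .call _ _ => true
  | .memo _ _ => true
  | _ => false

def laMemoToCall : LaRunElem S → Option (LaRunElem S)
  | .memo q i => some (.call q i)
  | _ => none

def Result.laElem {S : Type} : Result → LaRunElem S
  | .successAt i => .succAt i
  | .failure => .fail

/-! ## The backtracking matching algorithm `Match-(la,at)` -/

/-- Big-step semantics (with produced run) of the backtracking matching algorithm
`Match-(la,at)` for NFAs with sub-automata: `LAMatchRun w A q i r s` means the call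
`Match-(la,at)_{A,w}(q, i)` terminates with result `r` and produces the run `s`.
For simplicity, only the look-around kind `pla` (besides `at`) is treated. -/
inductive LAMatchRun (w : List Sigma) :
    SubNFA Sigma S → S → ℕ → Result → List (LaRunElem S) → Prop where
  | accept {A : SubNFA Sigma S} {q : S} {i : ℕ} : q ∈ A.F →
      LAMatchRun w A q i (.successAt i) [.call q i, .succAt i]
  | eps {A : SubNFA Sigma S} {q q' : S} {i : ℕ} {r : Result} {s : List (LaRunElem S)} :
      q ∉ A.F → A.T q = SubTrans.eps q' →
      LAMatchRun w A q' i r s →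
      LAMatchRun w A q i r (.call q i :: s ++ [r.laElem])
  | branchSucc {A : SubNFA Sigma S} {q q' q'' : S} {i i' : ℕ} {s : List (LaRunElem S)} :
      q ∉ A.F → A.T q = SubTrans.branch q' q'' →
      LAMatchRun w A q' i (.successAt i') s →
      LAMatchRun w A q i (.successAt i') (.call q i :: s ++ [LaRunElem.succAt i'])
  | branchFail {A : SubNFA Sigma S} {q q' q'' : S} {i : ℕ} {r : Result}
      {s s' : List (LaRunElem S)} :
      q ∉ A.F → A.T q = SubTrans.branch q' q'' →
      LAMatchRun w A q' i .failure s →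
      LAMatchRun w A q'' i r s' →
      LAMatchRun w A q i r (.call q i :: s ++ s' ++ [r.laElem])
  | charSucc {A : SubNFA Sigma S} {q q' : S} {σ : Sigma} {i : ℕ} {r : Result}
      {s : List (LaRunElem S)} :
      q ∉ A.F → A.T q = SubTrans.char σ q' →
      w[i]? = some σ →
      LAMatchRun w A q' (i + 1) r s →
      LAMatchRun w A q i r (.call q i :: s ++ [r.laElem])
  | charFail {A : SubNFA Sigma S} {q q' : S} {σ : Sigma} {i : ℕ} :
      q ∉ A.F → A.T q = SubTrans.char σ q' →
      w[i]? ≠ some σ →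
      LAMatchRun w A q i .failure [.call q i, .fail]
  | plaSucc {A A' : SubNFA Sigma S} {q q' : S} {i i' : ℕ} {r : Result}
      {s1 s2 : List (LaRunElem S)} :
      q ∉ A.F → A.T q = SubTrans.sub Kind.pla A' q' →
      LAMatchRun w A' A'.q0 i (.successAt i') s1 →
      LAMatchRun w A q' i r s2 →
      LAMatchRun w A q i r (.call q i :: s1 ++ s2 ++ [r.laElem])
  | plaFail {A A' : SubNFA Sigma S} {q q' : S} {i : ℕ} {s1 : List (LaRunElem S)} :
      q ∉ A.F → A.T q = SubTrans.sub Kind.pla A' q' →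
      LAMatchRun w A' A'.q0 i .failure s1 →
      LAMatchRun w A q i .failure (.call q i :: s1 ++ [LaRunElem.fail])
  | atSucc {A A' : SubNFA Sigma S} {q q' : S} {i i' : ℕ} {r : Result}
      {s1 s2 : List (LaRunElem S)} :
      q ∉ A.F → A.T q = SubTrans.sub Kind.at A' q' →
      LAMatchRun w A' A'.q0 i (.successAt i') s1 →
      LAMatchRun w A q' i' r s2 →
      LAMatchRun w A q i r (.call q i :: s1 ++ s2 ++ [r.laElem])
  | atFail {A A' : SubNFA Sigma S} {q q' : S} {i : ℕ} {s1 : List (LaRunElem S)} :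
      q ∉ A.F → A.T q = SubTrans.sub Kind.at A' q' →
      LAMatchRun w A' A'.q0 i .failure s1 →
      LAMatchRun w A q i .failure (.call q i :: s1 ++ [LaRunElem.fail])

/-! ## `Memo-la` -/

/-- Values of the memoization table of `Memo-la`: `Failure` or `Success`. -/
inductive LaVal : Type where
  | success : LaVal
  | failure : LaVal
deriving DecidableEq

/-- Results of `Memo-la`: `SuccessAt i'`, bare `Success`, or `Failure`. -/
inductive LaResult : Type where
  | successAt : ℕ → LaResult
  | success : LaResult
  | failure : LaResult
deriving DecidableEq

def LaVal.toResult : LaVal → LaResult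
  | .success => .success
  | .failure => .failure

def LaResult.elem {S : Type} : LaResult → LaRunElem S
  | .successAt i => .succAt i
  | .success => .succ
  | .failure => .fail

def Result.toLa : Result → LaResult
  | .successAt i => .successAt i
  | .failure => .failure

/-- The final recording of `Memo-la`: `M(q,i) := Success` if the result is
`SuccessAt i'` or `Success`, and `M(q,i) := Failure` if the result is `Failure`. -/
def laRecord [DecidableEq S] (M : S × ℕ → Option LaVal) (q : S) (i : ℕ) (r : LaResult) :
    S × ℕ → Option LaVal :=
  fun p => if p = (q, i) then
    some (match r with | .failure => LaVal.failure | _ => LaVal.success)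
  else M p

/-- Big-step semantics (with resulting memoization table and produced run) of the
memoized backtracking matching algorithm `Memo-la` for la-NFAs:
`MemoLaRun w A q i M M' r s` means the call `Memo-la^M_{A,w}(q, i)` terminates with
result `r`, final memoization table `M'`, and produces the run `s`. The memoization
table is shared between the top-level automaton and all sub-automata. -/
inductive MemoLaRun [DecidableEq S] (w : List Sigma) :
    SubNFA Sigma S → S → ℕ → (S × ℕ → Option LaVal) → (S × ℕ → Option LaVal) →
    LaResult → List (LaRunElem S) → Prop where
  | memoHit {A : SubNFA Sigma S} {q : S} {i : ℕ} {M : S × ℕ → Option LaVal} {v : LaVal} :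
      M (q, i) = some v →
      MemoLaRun w A q i M M v.toResult [.memo q i, v.toResult.elem]
  | accept {A : SubNFA Sigma S} {q : S} {i : ℕ} {M : S × ℕ → Option LaVal} :
      M (q, i) = none → q ∈ A.F →
      MemoLaRun w A q i M (laRecord M q i (.successAt i)) (.successAt i)
        [.call q i, .succAt i]
  | eps {A : SubNFA Sigma S} {q q' : S} {i : ℕ} {M M' : S × ℕ → Option LaVal}
      {r : LaResult} {s : List (LaRunElem S)} :
      M (q, i) = none → q ∉ A.F → A.T q = SubTrans.eps q' →
      MemoLaRun w A q' i M M' r s →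
      MemoLaRun w A q i M (laRecord M' q i r) r (.call q i :: s ++ [r.elem])
  | branchNoFail {A : SubNFA Sigma S} {q q' q'' : S} {i : ℕ}
      {M M' : S × ℕ → Option LaVal} {r : LaResult} {s : List (LaRunElem S)} :
      M (q, i) = none → q ∉ A.F → A.T q = SubTrans.branch q' q'' →
      MemoLaRun w A q' i M M' r s → r ≠ .failure →
      MemoLaRun w A q i M (laRecord M' q i r) r (.call q i :: s ++ [r.elem])
  | branchFail {A : SubNFA Sigma S} {q q' q'' : S} {i : ℕ}
      {M M1 M2 : S × ℕ → Option LaVal} {r : LaResult} {s1 s2 : List (LaRunElem S)} :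
      M (q, i) = none → q ∉ A.F → A.T q = SubTrans.branch q' q'' →
      MemoLaRun w A q' i M M1 .failure s1 →
      MemoLaRun w A q'' i M1 M2 r s2 →
      MemoLaRun w A q i M (laRecord M2 q i r) r (.call q i :: s1 ++ s2 ++ [r.elem])
  | charSucc {A : SubNFA Sigma S} {q q' : S} {σ : Sigma} {i : ℕ}
      {M M' : S × ℕ → Option LaVal} {r : LaResult} {s : List (LaRunElem S)} :
      M (q, i) = none → q ∉ A.F → A.T q = SubTrans.char σ q' →
      w[i]? = some σ →
      MemoLaRun w A q' (i + 1) M M' r s →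
      MemoLaRun w A q i M (laRecord M' q i r) r (.call q i :: s ++ [r.elem])
  | charFail {A : SubNFA Sigma S} {q q' : S} {σ : Sigma} {i : ℕ}
      {M : S × ℕ → Option LaVal} :
      M (q, i) = none → q ∉ A.F → A.T q = SubTrans.char σ q' →
      w[i]? ≠ some σ →
      MemoLaRun w A q i M (laRecord M q i .failure) .failure [.call q i, .fail]
  | plaSucc {A A' : SubNFA Sigma S} {q q' : S} {i : ℕ}
      {M M1 M2 : S × ℕ → Option LaVal} {r1 r : LaResult} {s1 s2 : List (LaRunElem S)} :
      M (q, i) = none → q ∉ A.F → A.T q = SubTrans.sub Kind.pla A' q' →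
      MemoLaRun w A' A'.q0 i M M1 r1 s1 → r1 ≠ .failure →
      MemoLaRun w A q' i M1 M2 r s2 →
      MemoLaRun w A q i M (laRecord M2 q i r) r (.call q i :: s1 ++ s2 ++ [r.elem])
  | plaFail {A A' : SubNFA Sigma S} {q q' : S} {i : ℕ}
      {M M1 : S × ℕ → Option LaVal} {s1 : List (LaRunElem S)} :
      M (q, i) = none → q ∉ A.F → A.T q = SubTrans.sub Kind.pla A' q' →
      MemoLaRun w A' A'.q0 i M M1 .failure s1 →
      MemoLaRun w A q i M (laRecord M1 q i .failure) .failure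
        (.call q i :: s1 ++ [LaRunElem.fail])

/-! ## `Memo-at` -/

/-- Results of `Memo-at`: `SuccessAt(i', K)` with a set `K` of delayed memoization keys,
or `Failure(j)` with a nesting depth `j`. -/
inductive AtResult (S : Type) : Type where
  | successAt : ℕ → Finset (S × ℕ) → AtResult S
  | failure : ℕ → AtResult S

/-- Elements of runs of `Memo-at`: calls `C(q,i)`, memoization-table invocations
`M(q,i)`, and results `S(i')` and `F(j)`. -/
inductive AtRunElem (S : Type) : Type where
  | call : S → ℕ → AtRunElem S
  | memo : S → ℕ → AtRunElem S
  | succ : ℕ → AtRunElem S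
  | fail : ℕ → AtRunElem S
deriving DecidableEq

def AtRunElem.isRet : AtRunElem S → Bool
  | .succ _ => true
  | .fail _ => true
  | _ => false

def AtRunElem.isCall : AtRunElem S → Bool
  | .call _ _ => true
  | .memo _ _ => true
  | _ => false

def atMemoToCall : AtRunElem S → Option (AtRunElem S)
  | .memo q i => some (.call q i)
  | _ => none

def AtResult.elem {S : Type} : AtResult S → AtRunElem S
  | .successAt i _ => .succ i
  | .failure j => .fail j

/-- `f`, converting results of `Memo-at` to results of `Match-(la,at)`. -/
def AtResult.toResult {S : Type} : AtResult S → Result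
  | .successAt i _ => .successAt i
  | .failure _ => .failure

/-- The final step of `Memo-at`: on success, the key `(q,i)` is added to the set of
delayed keys. -/
def atFinal [DecidableEq S] (q : S) (i : ℕ) : AtResult S → AtResult S
  | .successAt i' K => .successAt i' (insert (q, i) K)
  | .failure j => .failure j

/-- The final recording of `Memo-at`: `M(q,i) := Failure(j)` if the result is
`Failure(j)`. -/
def atRecord [DecidableEq S] (M : S × ℕ → Option ℕ) (q : S) (i : ℕ) :
    AtResult S → (S × ℕ → Option ℕ)
  | .failure j => fun p => if p = (q, i) then some j else M p
  | _ => M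

/-- Batch recording `M(k) := Failure(j)` for every `k ∈ K`. -/
def atBatch [DecidableEq S] (M : S × ℕ → Option ℕ) (K : Finset (S × ℕ)) (j : ℕ) :
    S × ℕ → Option ℕ :=
  fun p => if p ∈ K then some j else M p

/-- Big-step semantics (with resulting memoization table and produced run) of the
memoized backtracking matching algorithm `Memo-at` for at-NFAs:
`MemoAtRun A0 w A q i M M' r s` means the call `Memo-at^M_{A0,A,w}(q, i)` (with the
whole automaton `A0` and current sub-automaton `A`) terminates with result `r`, final
memoization table `M'`, and produces the run `s`. -/
inductive MemoAtRun [DecidableEq S] (A0 : SubNFA Sigma S) (w : List Sigma) :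
    SubNFA Sigma S → S → ℕ → (S × ℕ → Option ℕ) → (S × ℕ → Option ℕ) →
    AtResult S → List (AtRunElem S) → Prop where
  | memoHit {A : SubNFA Sigma S} {q : S} {i j : ℕ} {M : S × ℕ → Option ℕ} :
      M (q, i) = some j →
      MemoAtRun A0 w A q i M M (.failure j) [.memo q i, .fail j]
  | accept {A : SubNFA Sigma S} {q : S} {i : ℕ} {M : S × ℕ → Option ℕ} :
      M (q, i) = none → q ∈ A.F →
      MemoAtRun A0 w A q i M M (.successAt i {(q, i)}) [.call q i, .succ i]
  | eps {A : SubNFA Sigma S} {q q' : S} {i : ℕ} {M M' : S × ℕ → Option ℕ}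
      {r : AtResult S} {s : List (AtRunElem S)} :
      M (q, i) = none → q ∉ A.F → A.T q = SubTrans.eps q' →
      MemoAtRun A0 w A q' i M M' r s →
      MemoAtRun A0 w A q i M (atRecord M' q i r) (atFinal q i r)
        (.call q i :: s ++ [r.elem])
  | branchNoBT {A : SubNFA Sigma S} {q q' q'' : S} {i : ℕ} {M M' : S × ℕ → Option ℕ}
      {r : AtResult S} {s : List (AtRunElem S)} :
      M (q, i) = none → q ∉ A.F → A.T q = SubTrans.branch q' q'' →
      MemoAtRun A0 w A q' i M M' r s →
      (∀ j, r = AtResult.failure j → j ≠ A0.nu q) →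
      MemoAtRun A0 w A q i M (atRecord M' q i r) (atFinal q i r)
        (.call q i :: s ++ [r.elem])
  | branchBTSucc {A : SubNFA Sigma S} {q q' q'' : S} {i i'' : ℕ} {K : Finset (S × ℕ)}
      {M M1 M2 : S × ℕ → Option ℕ} {s1 s2 : List (AtRunElem S)} :
      M (q, i) = none → q ∉ A.F → A.T q = SubTrans.branch q' q'' →
      MemoAtRun A0 w A q' i M M1 (.failure (A0.nu q)) s1 →
      MemoAtRun A0 w A q'' i M1 M2 (.successAt i'' K) s2 →
      MemoAtRun A0 w A q i M M2 (atFinal q i (.successAt i'' K))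
        (.call q i :: s1 ++ s2 ++ [AtRunElem.succ i''])
  | branchBTFail {A : SubNFA Sigma S} {q q' q'' : S} {i j' : ℕ}
      {M M1 M2 : S × ℕ → Option ℕ} {s1 s2 : List (AtRunElem S)} :
      M (q, i) = none → q ∉ A.F → A.T q = SubTrans.branch q' q'' →
      MemoAtRun A0 w A q' i M M1 (.failure (A0.nu q)) s1 →
      MemoAtRun A0 w A q'' i M1 M2 (.failure j') s2 →
      MemoAtRun A0 w A q i M (atRecord M2 q i (.failure (min (A0.nu q) j')))
        (.failure (min (A0.nu q) j'))
        (.call q i :: s1 ++ s2 ++ [AtRunElem.fail (min (A0.nu q) j')])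
  | charSucc {A : SubNFA Sigma S} {q q' : S} {σ : Sigma} {i : ℕ}
      {M M' : S × ℕ → Option ℕ} {r : AtResult S} {s : List (AtRunElem S)} :
      M (q, i) = none → q ∉ A.F → A.T q = SubTrans.char σ q' →
      w[i]? = some σ →
      MemoAtRun A0 w A q' (i + 1) M M' r s →
      MemoAtRun A0 w A q i M (atRecord M' q i r) (atFinal q i r)
        (.call q i :: s ++ [r.elem])
  | charFail {A : SubNFA Sigma S} {q q' : S} {σ : Sigma} {i : ℕ}
      {M : S × ℕ → Option ℕ} :
      M (q, i) = none → q ∉ A.F → A.T q = SubTrans.char σ q' →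
      w[i]? ≠ some σ →
      MemoAtRun A0 w A q i M (atRecord M q i (.failure (A0.nu q)))
        (.failure (A0.nu q)) [.call q i, .fail (A0.nu q)]
  | subSuccSucc {A A' : SubNFA Sigma S} {q q' : S} {i i' i'' : ℕ}
      {K' K'' : Finset (S × ℕ)} {M M1 M2 : S × ℕ → Option ℕ}
      {s1 s2 : List (AtRunElem S)} :
      M (q, i) = none → q ∉ A.F → A.T q = SubTrans.sub Kind.at A' q' →
      MemoAtRun A0 w A' A'.q0 i M M1 (.successAt i' K') s1 →
      MemoAtRun A0 w A q' i' M1 M2 (.successAt i'' K'') s2 →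
      MemoAtRun A0 w A q i M M2 (atFinal q i (.successAt i'' (K' ∪ K'')))
        (.call q i :: s1 ++ s2 ++ [AtRunElem.succ i''])
  | subSuccFail {A A' : SubNFA Sigma S} {q q' : S} {i i' j : ℕ} {K' : Finset (S × ℕ)}
      {M M1 M2 : S × ℕ → Option ℕ} {s1 s2 : List (AtRunElem S)} :
      M (q, i) = none → q ∉ A.F → A.T q = SubTrans.sub Kind.at A' q' →
      MemoAtRun A0 w A' A'.q0 i M M1 (.successAt i' K') s1 →
      MemoAtRun A0 w A q' i' M1 M2 (.failure j) s2 →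
      MemoAtRun A0 w A q i M (atRecord (atBatch M2 K' j) q i (.failure j)) (.failure j)
        (.call q i :: s1 ++ s2 ++ [AtRunElem.fail j])
  | subFailHigh {A A' : SubNFA Sigma S} {q q' : S} {i j : ℕ}
      {M M1 : S × ℕ → Option ℕ} {s1 : List (AtRunElem S)} :
      M (q, i) = none → q ∉ A.F → A.T q = SubTrans.sub Kind.at A' q' →
      MemoAtRun A0 w A' A'.q0 i M M1 (.failure j) s1 →
      A0.nu q < j →
      MemoAtRun A0 w A q i M (atRecord M1 q i (.failure (A0.nu q)))
        (.failure (A0.nu q)) (.call q i :: s1 ++ [AtRunElem.fail (A0.nu q)])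
  | subFailLow {A A' : SubNFA Sigma S} {q q' : S} {i j : ℕ}
      {M M1 : S × ℕ → Option ℕ} {s1 : List (AtRunElem S)} :
      M (q, i) = none → q ∉ A.F → A.T q = SubTrans.sub Kind.at A' q' →
      MemoAtRun A0 w A' A'.q0 i M M1 (.failure j) s1 →
      j ≤ A0.nu q →
      MemoAtRun A0 w A q i M (atRecord M1 q i (.failure j)) (.failure j)
        (.call q i :: s1 ++ [AtRunElem.fail j])

/-! ## The combined algorithm `Memo-(la,at)` -/

/-- Values of the memoization table of `Memo-(la,at)`: `Success` or `Failure(j)`. -/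
inductive LaAtVal : Type where
  | success : LaAtVal
  | failure : ℕ → LaAtVal

/-- Results of `Memo-(la,at)`: `SuccessAt(i', K)`, bare `Success`, or `Failure(j)`. -/
inductive LaAtResult (S : Type) : Type where
  | successAt : ℕ → Finset (S × ℕ) → LaAtResult S
  | success : LaAtResult S
  | failure : ℕ → LaAtResult S

def LaAtVal.toResult {S : Type} : LaAtVal → LaAtResult S
  | .success => .success
  | .failure j => .failure j

/-- `f`, converting results of `Memo-(la,at)` to results of `Match-(la,at)`
(undefined on the bare value `Success`). -/
def LaAtResult.toResult? {S : Type} : LaAtResult S → Option Result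
  | .successAt i _ => some (.successAt i)
  | .success => none
  | .failure _ => some .failure

def laAtFinal [DecidableEq S] (q : S) (i : ℕ) : LaAtResult S → LaAtResult S
  | .successAt i' K => .successAt i' (insert (q, i) K)
  | r => r

def laAtRecord [DecidableEq S] (M : S × ℕ → Option LaAtVal) (q : S) (i : ℕ) :
    LaAtResult S → (S × ℕ → Option LaAtVal)
  | .successAt _ _ => M
  | .success => fun p => if p = (q, i) then some LaAtVal.success else M p
  | .failure j => fun p => if p = (q, i) then some (LaAtVal.failure j) else M p

def laAtBatch [DecidableEq S] (M : S × ℕ → Option LaAtVal) (K : Finset (S × ℕ))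
    (v : LaAtVal) : S × ℕ → Option LaAtVal :=
  fun p => if p ∈ K then some v else M p

/-- Big-step semantics (with resulting memoization table and the number of recursive
calls made) of the combined memoized backtracking matching algorithm `Memo-(la,at)`:
`MemoLaAtRun w A0 A q i M M' r n` means the call `Memo-(la,at)^M_{A0,A,w}(q, i)`
terminates with result `r`, final memoization table `M'`, making `n` calls in total.
On a positive look-ahead transition, the sub-automaton becomes the new whole automaton
(so nesting depths of atomic grouping are reset by look-around operators). -/
inductive MemoLaAtRun [DecidableEq S] (w : List Sigma) :
    SubNFA Sigma S → SubNFA Sigma S → S → ℕ →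
    (S × ℕ → Option LaAtVal) → (S × ℕ → Option LaAtVal) → LaAtResult S → ℕ → Prop where
  | memoHit {A0 A : SubNFA Sigma S} {q : S} {i : ℕ} {M : S × ℕ → Option LaAtVal}
      {v : LaAtVal} :
      M (q, i) = some v →
      MemoLaAtRun w A0 A q i M M v.toResult 1
  | accept {A0 A : SubNFA Sigma S} {q : S} {i : ℕ} {M : S × ℕ → Option LaAtVal} :
      M (q, i) = none → q ∈ A.F →
      MemoLaAtRun w A0 A q i M M (.successAt i {(q, i)}) 1
  | eps {A0 A : SubNFA Sigma S} {q q' : S} {i : ℕ} {M M' : S × ℕ → Option LaAtVal}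
      {r : LaAtResult S} {n : ℕ} :
      M (q, i) = none → q ∉ A.F → A.T q = SubTrans.eps q' →
      MemoLaAtRun w A0 A q' i M M' r n →
      MemoLaAtRun w A0 A q i M (laAtRecord M' q i (laAtFinal q i r)) (laAtFinal q i r)
        (n + 1)
  | branchNoBT {A0 A : SubNFA Sigma S} {q q' q'' : S} {i : ℕ}
      {M M' : S × ℕ → Option LaAtVal} {r : LaAtResult S} {n : ℕ} :
      M (q, i) = none → q ∉ A.F → A.T q = SubTrans.branch q' q'' →
      MemoLaAtRun w A0 A q' i M M' r n →
      (∀ j, r = LaAtResult.failure j → j ≠ A0.nu q) →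
      MemoLaAtRun w A0 A q i M (laAtRecord M' q i (laAtFinal q i r)) (laAtFinal q i r)
        (n + 1)
  | branchBTFail {A0 A : SubNFA Sigma S} {q q' q'' : S} {i j' : ℕ}
      {M M1 M2 : S × ℕ → Option LaAtVal} {n1 n2 : ℕ} :
      M (q, i) = none → q ∉ A.F → A.T q = SubTrans.branch q' q'' →
      MemoLaAtRun w A0 A q' i M M1 (.failure (A0.nu q)) n1 →
      MemoLaAtRun w A0 A q'' i M1 M2 (.failure j') n2 →
      MemoLaAtRun w A0 A q i M
        (laAtRecord M2 q i (.failure (min (A0.nu q) j')))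
        (.failure (min (A0.nu q) j')) (n1 + n2 + 1)
  | branchBTOther {A0 A : SubNFA Sigma S} {q q' q'' : S} {i : ℕ}
      {M M1 M2 : S × ℕ → Option LaAtVal} {r : LaAtResult S} {n1 n2 : ℕ} :
      M (q, i) = none → q ∉ A.F → A.T q = SubTrans.branch q' q'' →
      MemoLaAtRun w A0 A q' i M M1 (.failure (A0.nu q)) n1 →
      MemoLaAtRun w A0 A q'' i M1 M2 r n2 →
      (∀ j, r ≠ LaAtResult.failure j) →
      MemoLaAtRun w A0 A q i M (laAtRecord M2 q i (laAtFinal q i r)) (laAtFinal q i r)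
        (n1 + n2 + 1)
  | charSucc {A0 A : SubNFA Sigma S} {q q' : S} {σ : Sigma} {i : ℕ}
      {M M' : S × ℕ → Option LaAtVal} {r : LaAtResult S} {n : ℕ} :
      M (q, i) = none → q ∉ A.F → A.T q = SubTrans.char σ q' →
      w[i]? = some σ →
      MemoLaAtRun w A0 A q' (i + 1) M M' r n →
      MemoLaAtRun w A0 A q i M (laAtRecord M' q i (laAtFinal q i r)) (laAtFinal q i r)
        (n + 1)
  | charFail {A0 A : SubNFA Sigma S} {q q' : S} {σ : Sigma} {i : ℕ}
      {M : S × ℕ → Option LaAtVal} :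
      M (q, i) = none → q ∉ A.F → A.T q = SubTrans.char σ q' →
      w[i]? ≠ some σ →
      MemoLaAtRun w A0 A q i M (laAtRecord M q i (.failure (A0.nu q)))
        (.failure (A0.nu q)) 1
  | plaSuccAt {A0 A A' : SubNFA Sigma S} {q q' : S} {i i' : ℕ} {K' : Finset (S × ℕ)}
      {M M1 M2 : S × ℕ → Option LaAtVal} {r : LaAtResult S} {n1 n2 : ℕ} :
      M (q, i) = none → q ∉ A.F → A.T q = SubTrans.sub Kind.pla A' q' →
      MemoLaAtRun w A' A' A'.q0 i M M1 (.successAt i' K') n1 →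
      MemoLaAtRun w A0 A q' i (laAtBatch M1 K' LaAtVal.success) M2 r n2 →
      MemoLaAtRun w A0 A q i M (laAtRecord M2 q i (laAtFinal q i r)) (laAtFinal q i r)
        (n1 + n2 + 1)
  | plaBare {A0 A A' : SubNFA Sigma S} {q q' : S} {i : ℕ}
      {M M1 M2 : S × ℕ → Option LaAtVal} {r : LaAtResult S} {n1 n2 : ℕ} :
      M (q, i) = none → q ∉ A.F → A.T q = SubTrans.sub Kind.pla A' q' →
      MemoLaAtRun w A' A' A'.q0 i M M1 .success n1 →
      MemoLaAtRun w A0 A q' i M1 M2 r n2 →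
      MemoLaAtRun w A0 A q i M (laAtRecord M2 q i (laAtFinal q i r)) (laAtFinal q i r)
        (n1 + n2 + 1)
  | plaFail {A0 A A' : SubNFA Sigma S} {q q' : S} {i j : ℕ}
      {M M1 : S × ℕ → Option LaAtVal} {n1 : ℕ} :
      M (q, i) = none → q ∉ A.F → A.T q = SubTrans.sub Kind.pla A' q' →
      MemoLaAtRun w A' A' A'.q0 i M M1 (.failure j) n1 →
      MemoLaAtRun w A0 A q i M (laAtRecord M1 q i (.failure (A0.nu q)))
        (.failure (A0.nu q)) (n1 + 1)
  | atSuccSucc {A0 A A' : SubNFA Sigma S} {q q' : S} {i i' i'' : ℕ}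
      {K' K'' : Finset (S × ℕ)} {M M1 M2 : S × ℕ → Option LaAtVal} {n1 n2 : ℕ} :
      M (q, i) = none → q ∉ A.F → A.T q = SubTrans.sub Kind.at A' q' →
      MemoLaAtRun w A0 A' A'.q0 i M M1 (.successAt i' K') n1 →
      MemoLaAtRun w A0 A q' i' M1 M2 (.successAt i'' K'') n2 →
      MemoLaAtRun w A0 A q i M M2
        (laAtFinal q i (.successAt i'' (K' ∪ K''))) (n1 + n2 + 1)
  | atSuccBare {A0 A A' : SubNFA Sigma S} {q q' : S} {i i' : ℕ} {K' : Finset (S × ℕ)}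
      {M M1 M2 : S × ℕ → Option LaAtVal} {n1 n2 : ℕ} :
      M (q, i) = none → q ∉ A.F → A.T q = SubTrans.sub Kind.at A' q' →
      MemoLaAtRun w A0 A' A'.q0 i M M1 (.successAt i' K') n1 →
      MemoLaAtRun w A0 A q' i' M1 M2 .success n2 →
      MemoLaAtRun w A0 A q i M
        (laAtRecord (laAtBatch M2 K' LaAtVal.success) q i .success) .success
        (n1 + n2 + 1)
  | atSuccFail {A0 A A' : SubNFA Sigma S} {q q' : S} {i i' j : ℕ} {K' : Finset (S × ℕ)}
      {M M1 M2 : S × ℕ → Option LaAtVal} {n1 n2 : ℕ} :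
      M (q, i) = none → q ∉ A.F → A.T q = SubTrans.sub Kind.at A' q' →
      MemoLaAtRun w A0 A' A'.q0 i M M1 (.successAt i' K') n1 →
      MemoLaAtRun w A0 A q' i' M1 M2 (.failure j) n2 →
      MemoLaAtRun w A0 A q i M
        (laAtRecord (laAtBatch M2 K' (LaAtVal.failure j)) q i (.failure j))
        (.failure j) (n1 + n2 + 1)
  | atBare {A0 A A' : SubNFA Sigma S} {q q' : S} {i : ℕ}
      {M M1 : S × ℕ → Option LaAtVal} {n1 : ℕ} :
      M (q, i) = none → q ∉ A.F → A.T q = SubTrans.sub Kind.at A' q' →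
      MemoLaAtRun w A0 A' A'.q0 i M M1 .success n1 →
      MemoLaAtRun w A0 A q i M (laAtRecord M1 q i .success) .success (n1 + 1)
  | atFailHigh {A0 A A' : SubNFA Sigma S} {q q' : S} {i j : ℕ}
      {M M1 : S × ℕ → Option LaAtVal} {n1 : ℕ} :
      M (q, i) = none → q ∉ A.F → A.T q = SubTrans.sub Kind.at A' q' →
      MemoLaAtRun w A0 A' A'.q0 i M M1 (.failure j) n1 →
      A0.nu q < j →
      MemoLaAtRun w A0 A q i M (laAtRecord M1 q i (.failure (A0.nu q)))
        (.failure (A0.nu q)) (n1 + 1)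
  | atFailLow {A0 A A' : SubNFA Sigma S} {q q' : S} {i j : ℕ}
      {M M1 : S × ℕ → Option LaAtVal} {n1 : ℕ} :
      M (q, i) = none → q ∉ A.F → A.T q = SubTrans.sub Kind.at A' q' →
      MemoLaAtRun w A0 A' A'.q0 i M M1 (.failure j) n1 →
      j ≤ A0.nu q →
      MemoLaAtRun w A0 A q i M (laAtRecord M1 q i (.failure j)) (.failure j) (n1 + 1)

/-!
Consider a table hit `M(q,i)` all of whose predecessors have been expanded, so that the part `P`
of the run before it is an initial segment of the run of `Match`. The failure of `(q, i)` has been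
recorded, so `C(q,i)` occurs in `P`. In a run of `Match` every call opens a complete run of that
call, and this run depends on `(q, i)` only. It cannot contain `C(q,i)` a second time, because the
nested run would be a shorter copy of itself. Hence the run opened by the first `C(q,i)` is over
before the end of `P`, and it is both the sequence spliced in by `sub` and the sequence which
`Match` produces at this place.
-/

/-- Well-nested sequences of calls and results, a result being an element recognized by
`isRet`: these are the stretches of a run across which the depth counter of `phiAux` returns
to its initial value. -/
inductive IsBalanced (isRet : α → Bool) : List α → Prop where
  | nil : IsBalanced isRet []
  | wrap {c e : α} {b : List α} : isRet c = false → isRet e = true → IsBalanced isRet b →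
      IsBalanced isRet (c :: b ++ [e])
  | append {b b' : List α} : IsBalanced isRet b → IsBalanced isRet b' →
      IsBalanced isRet (b ++ b')

section Phi

variable {isRet : α → Bool}

theorem phiAux_append_cons (P X : List α) (e : α) (n : ℕ) :
    phiAux isRet (P ++ e :: X) P.length n =
      if isRet e then
        if n ≤ 1 then some P.length else phiAux isRet (P ++ e :: X) (P.length + 1) (n - 1)
      else phiAux isRet (P ++ e :: X) (P.length + 1) (n + 1) := by
  rw [phiAux]
  split <;> simp_all

theorem phiAux_append_call {c : α} (hc : isRet c = false) (P X : List α) (n : ℕ) :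
    phiAux isRet (P ++ c :: X) P.length n =
      phiAux isRet (P ++ [c] ++ X) (P ++ [c]).length (n + 1) := by
  simp [phiAux_append_cons, hc]

theorem phiAux_append_ret_one {e : α} (he : isRet e = true) (P X : List α) :
    phiAux isRet (P ++ e :: X) P.length 1 = some P.length := by
  simp [phiAux_append_cons, he]

theorem phiAux_append_ret_add_two {e : α} (he : isRet e = true) (P X : List α) (n : ℕ) :
    phiAux isRet (P ++ e :: X) P.length (n + 2) =
      phiAux isRet (P ++ [e] ++ X) (P ++ [e]).length (n + 1) := by
  simp [phiAux_append_cons, he]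

theorem IsBalanced.phiAux_append {b : List α} (hb : IsBalanced isRet b) (P X : List α) (n : ℕ) :
    phiAux isRet (P ++ (b ++ X)) P.length (n + 1) =
      phiAux isRet (P ++ b ++ X) (P ++ b).length (n + 1) := by
  induction hb generalizing P X n with
  | nil => simp only [List.nil_append, List.append_nil]
  | @wrap c e b hc he _ ih =>
    calc phiAux isRet (P ++ (c :: b ++ [e] ++ X)) P.length (n + 1)
        = phiAux isRet (P ++ c :: (b ++ e :: X)) P.length (n + 1) := by
          simp only [List.cons_append, List.append_assoc, List.nil_append]
      _ = phiAux isRet (P ++ [c] ++ b ++ e :: X) (P ++ [c] ++ b).length (n + 2) := by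
          rw [phiAux_append_call hc, ih]
      _ = phiAux isRet (P ++ [c] ++ b ++ [e] ++ X) (P ++ [c] ++ b ++ [e]).length (n + 1) :=
          phiAux_append_ret_add_two he _ _ _
      _ = phiAux isRet (P ++ (c :: b ++ [e]) ++ X) (P ++ (c :: b ++ [e])).length (n + 1) := by
          simp only [List.cons_append, List.append_assoc, List.nil_append]
  | @append b b' _ _ ih ih' =>
    rw [List.append_assoc b, ih, ih', List.append_assoc P]

theorem IsBalanced.phi_append {b : List α} (hb : IsBalanced isRet b) {c e : α}
    (hc : isRet c = false) (he : isRet e = true) (P X : List α) :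
    phi isRet (P ++ (c :: b ++ [e]) ++ X) P.length = some (P.length + (b.length + 1)) := by
  calc phi isRet (P ++ (c :: b ++ [e]) ++ X) P.length
      = phiAux isRet (P ++ c :: (b ++ e :: X)) P.length 0 := by
        simp only [phi, List.cons_append, List.append_assoc, List.nil_append]
    _ = phiAux isRet (P ++ [c] ++ b ++ e :: X) (P ++ [c] ++ b).length 1 := by
        rw [phiAux_append_call hc, hb.phiAux_append]
    _ = some (P ++ [c] ++ b).length := phiAux_append_ret_one he _ _
    _ = some (P.length + (b.length + 1)) := by simp [Nat.add_left_comm]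

end Phi

theorem findIdx?_append_cons {p : α → Bool} {P : List α} {a : α} (hP : ∀ x ∈ P, p x = false)
    (ha : p a = true) (X : List α) : (P ++ a :: X).findIdx? p = some P.length := by
  simp [List.findIdx?_append, List.findIdx?_cons, List.findIdx?_eq_none_iff.2 hP, ha]

section SubStar

variable [DecidableEq α] {m2c : α → Option α} {isRet : α → Bool}

theorem SubStar.of_forall_eq_none {s : List α} (h : ∀ a ∈ s, m2c a = none) :
    SubStar m2c isRet s s :=
  .done <| List.findIdx?_eq_none_iff.2 fun a ha => by simp [h a ha]

theorem subExpand_append {P P₁ P₂ b : List α} {m c e : α} (hP : P = P₁ ++ (c :: b ++ [e]) ++ P₂)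
    (hm : m2c m = some c) (hb : IsBalanced isRet b) (hc : isRet c = false) (he : isRet e = true)
    (hfirst : c ∉ P₁) (f : α) (R : List α) :
    subExpand m2c isRet (P ++ [m, f] ++ R) P.length = some (P ++ (c :: b ++ [e]) ++ R) := by
  have hget : (P ++ [m, f] ++ R)[P.length]? = some m := by simp
  have hsplit : P ++ [m, f] ++ R = P₁ ++ (c :: b ++ [e]) ++ (P₂ ++ [m, f] ++ R) := by
    simp only [hP, List.append_assoc]
  have hfind : (P ++ [m, f] ++ R).findIdx? (· == c) = some P₁.length := by
    rw [hsplit, List.append_assoc]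
    exact findIdx?_append_cons
      (fun x hx => beq_false_of_ne (ne_of_mem_of_not_mem hx hfirst)) (beq_self_eq_true c) _
  have hphi : phi isRet (P ++ [m, f] ++ R) P₁.length = some (P₁.length + (b.length + 1)) := by
    rw [hsplit, hb.phi_append hc he]
  have hcopy : ((P ++ [m, f] ++ R).drop (P₁.length + 1)).take (b.length + 1) = b ++ [e] := by
    rw [hsplit, show P₁ ++ (c :: b ++ [e]) ++ (P₂ ++ [m, f] ++ R) =
      P₁ ++ [c] ++ (b ++ [e] ++ (P₂ ++ [m, f] ++ R)) by simp]
    rw [List.drop_left' (by simp), List.take_left' (by simp)]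
  have htake : (P ++ [m, f] ++ R).take P.length = P := by
    rw [List.append_assoc, List.take_left' rfl]
  have hdrop : (P ++ [m, f] ++ R).drop (P.length + 2) = R := List.drop_left' (by simp)
  simp only [subExpand, hget, hm, hfind, hphi, htake, hdrop, Nat.add_sub_cancel_left, hcopy]
  simp only [List.append_assoc, List.cons_append, List.nil_append]

theorem SubStar.expand_first {P P₁ P₂ b R T : List α} {m c e f : α}
    (hP : P = P₁ ++ (c :: b ++ [e]) ++ P₂) (hm : m2c m = some c) (hb : IsBalanced isRet b)
    (hc : isRet c = false) (he : isRet e = true) (hfirst : c ∉ P₁)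
    (hmemo : ∀ a ∈ P, m2c a = none)
    (h : SubStar m2c isRet (P ++ (c :: b ++ [e]) ++ R) T) :
    SubStar m2c isRet (P ++ [m, f] ++ R) T := by
  refine .step ?_ (subExpand_append hP hm hb hc he hfirst f R) h
  rw [List.append_assoc]
  exact findIdx?_append_cons (fun a ha => by simp [hmemo a ha]) (by simp [hm]) _

end SubStar

theorem Result.isRet_elem (r : Result) : (r.elem : RunElem S).isRet = true := by
  cases r <;> rfl

theorem Result.memoToCall_elem (r : Result) : memoToCall (r.elem : RunElem S) = none := by
  cases r <;> rfl

section MatchRun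

variable {A : NFA Sigma S} {w : List Sigma} {q : S} {i : ℕ} {r r' : Result}
  {s s' : List (RunElem S)}

theorem MatchRun.unique (h : MatchRun A w q i r s) (h' : MatchRun A w q i r' s') :
    r = r' ∧ s = s' := by
  induction h generalizing r' s' with
  | _ => cases h' <;> grind

/-- The proper part of a run is a concatenation of runs, so a property of lists that is closed
under concatenation and under completing a run holds for it. -/
theorem MatchRun.exists_body {motive : List (RunElem S) → Prop} (nil : motive [])
    (append : ∀ {b b'}, motive b → motive b' → motive (b ++ b'))
    (wrap : ∀ {q i r b}, MatchRun A w q i r (.call q i :: b ++ [r.elem]) → motive b →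
      motive (.call q i :: b ++ [r.elem]))
    (h : MatchRun A w q i r s) :
    ∃ b, s = .call q i :: b ++ [r.elem] ∧ motive b := by
  have run {q i r s} (hs : MatchRun A w q i r s)
      (ih : ∃ b, s = .call q i :: b ++ [r.elem] ∧ motive b) : motive s := by
    obtain ⟨b, rfl, hb⟩ := ih
    exact wrap hs hb
  induction h with
  | accept | charFail => exact ⟨[], rfl, nil⟩
  | eps _ _ hs ih | branchSucc _ _ hs ih | charSucc _ _ _ hs ih => exact ⟨_, rfl, run hs ih⟩
  | branchFail _ _ hs hs' ih ih' => exact ⟨_, rfl, append (run hs ih) (run hs' ih')⟩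

theorem MatchRun.closure_induction {motive : List (RunElem S) → Prop} (nil : motive [])
    (append : ∀ {b b'}, motive b → motive b' → motive (b ++ b'))
    (wrap : ∀ {q i r b}, MatchRun A w q i r (.call q i :: b ++ [r.elem]) → motive b →
      motive (.call q i :: b ++ [r.elem]))
    (h : MatchRun A w q i r s) : motive s := by
  obtain ⟨b, rfl, hb⟩ := h.exists_body nil append wrap
  exact wrap h hb

theorem MatchRun.exists_balanced_body (h : MatchRun A w q i r s) :
    ∃ b, s = .call q i :: b ++ [r.elem] ∧ IsBalanced RunElem.isRet b :=
  h.exists_body .nil .append fun _ hb => .wrap rfl (Result.isRet_elem _) hb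

theorem MatchRun.memoToCall_eq_none (h : MatchRun A w q i r s) :
    ∀ a ∈ s, memoToCall a = none :=
  h.closure_induction (motive := fun b => ∀ a ∈ b, memoToCall a = none)
    (List.forall_mem_nil _) (fun hb hb' => List.forall_mem_append.2 ⟨hb, hb'⟩)
    fun _ hb => List.forall_mem_append.2
      ⟨List.forall_mem_cons.2 ⟨rfl, hb⟩, List.forall_mem_singleton.2 (Result.memoToCall_elem _)⟩

/-- Every call element of `L` is the start of a completed run of `Match` inside `L`. -/
def CallsComplete (A : NFA Sigma S) (w : List Sigma) (L : List (RunElem S)) : Prop :=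
  ∀ ⦃p j u v⦄, L = u ++ .call p j :: v → ∃ r t, MatchRun A w p j r t ∧ t <+: .call p j :: v

theorem CallsComplete.nil : CallsComplete A w [] := by
  intro p j u v h
  simp at h

theorem CallsComplete.append {L L' : List (RunElem S)} (h : CallsComplete A w L)
    (h' : CallsComplete A w L') : CallsComplete A w (L ++ L') := by
  intro p j u v huv
  rcases List.append_eq_append_iff.1 huv with ⟨x, rfl, hx⟩ | ⟨_ | ⟨a, x⟩, rfl, hx⟩
  · exact h' hx
  · exact h' (u := []) hx.symm
  · obtain ⟨rfl, rfl⟩ := List.cons.inj hx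
    obtain ⟨r, t, ht, htx⟩ := h rfl
    exact ⟨r, t, ht, htx.trans ⟨L', rfl⟩⟩

theorem CallsComplete.elem (r : Result) : CallsComplete A w [r.elem] := by
  intro p j u v h
  cases r <;> simp [Result.elem, List.singleton_eq_append_iff] at h

theorem MatchRun.callsComplete_of_body {b : List (RunElem S)}
    (h : MatchRun A w q i r (.call q i :: b ++ [r.elem])) (hb : CallsComplete A w b) :
    CallsComplete A w (.call q i :: b ++ [r.elem]) := by
  rintro p j (_ | ⟨a, u⟩) v huv
  · obtain ⟨⟨rfl, rfl⟩, -⟩ : (q = p ∧ i = j) ∧ b ++ [r.elem] = v := by simpa using huv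
    exact ⟨r, _, h, huv ▸ List.prefix_rfl⟩
  · exact hb.append (.elem r) (List.cons.inj huv).2

theorem MatchRun.callsComplete (h : MatchRun A w q i r s) : CallsComplete A w s :=
  h.closure_induction .nil .append MatchRun.callsComplete_of_body

theorem MatchRun.call_notMem_tail (h : MatchRun A w q i r s) : .call q i ∉ s.tail := by
  intro hmem
  obtain ⟨b, rfl, -⟩ := h.exists_balanced_body
  obtain ⟨u, v, huv⟩ := List.append_of_mem hmem
  have hsplit : .call q i :: b ++ [r.elem] = .call q i :: u ++ .call q i :: v :=
    congrArg (List.cons _) huv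
  obtain ⟨r', t, ht, hpre⟩ := h.callsComplete hsplit
  obtain ⟨-, rfl⟩ := h.unique ht
  have hlen := hpre.length_le
  rw [hsplit] at hlen
  simp only [List.cons_append, List.length_cons, List.length_append] at hlen
  omega

theorem MatchRun.prefix_of_prefix_append {P Q : List (RunElem S)} (hs : MatchRun A w q i r s)
    (h : s <+: .call q i :: P ++ (s ++ Q)) : s <+: .call q i :: P := by
  rcases List.prefix_or_prefix_of_prefix h (List.prefix_append _ _) with hin | ⟨x, hx⟩
  · exact hin
  cases x with
  | nil => exact ⟨[], by simpa using hx.symm⟩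
  | cons a x =>
    obtain ⟨b, hb, -⟩ := hs.exists_balanced_body
    have hoverlap : .call q i :: P ++ a :: x <+: .call q i :: P ++ (s ++ Q) := by rwa [hx]
    obtain ⟨rfl, -⟩ : a = .call q i ∧ x <+: b ++ r.elem :: Q := by simpa [hb] using hoverlap
    exact absurd (by simp [← hx]) hs.call_notMem_tail

/-- If a run of `Match` repeats a call, then its first run of this call is over before the
repetition begins: otherwise the call would be made again within its own run. -/
theorem MatchRun.exists_first_run {q₀ : S} {i₀ : ℕ} {r₀ : Result} {P Q : List (RunElem S)}
    (hT : MatchRun A w q₀ i₀ r₀ (P ++ s ++ Q)) (hs : MatchRun A w q i r s)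
    (hP : .call q i ∈ P) :
    ∃ P₁ P₂, P = P₁ ++ s ++ P₂ ∧ .call q i ∉ P₁ := by
  obtain ⟨P₁, P₂, rfl, hfirst⟩ := List.eq_append_cons_of_mem hP
  obtain ⟨r', t, ht, hpre⟩ := hT.callsComplete (p := q) (j := i) (u := P₁) (v := P₂ ++ (s ++ Q))
    (by simp only [List.append_assoc, List.cons_append])
  obtain ⟨-, rfl⟩ := hs.unique ht
  obtain ⟨P₃, hP₃⟩ := hs.prefix_of_prefix_append hpre
  exact ⟨P₁, P₃, by rw [List.append_assoc, hP₃], hfirst⟩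

/-- Every failure recorded in the table `M` is the result of a call of `Match` which has
already been made in `P`. -/
def TableWitnessed (A : NFA Sigma S) (w : List Sigma) (M : S × ℕ → Bool)
    (P : List (RunElem S)) : Prop :=
  ∀ ⦃q i⦄, M (q, i) = true → .call q i ∈ P ∧ ∃ s, MatchRun A w q i .failure s

theorem TableWitnessed.append {M : S × ℕ → Bool} {P : List (RunElem S)}
    (h : TableWitnessed A w M P) (X : List (RunElem S)) : TableWitnessed A w M (P ++ X) :=
  fun _ _ hM => ⟨List.mem_append_left X (h hM).1, (h hM).2⟩

end MatchRun

section MemoRun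

variable [DecidableEq S] {A : NFA Sigma S} {w : List Sigma} {q : S} {i : ℕ}
  {M M' : S × ℕ → Bool} {r : Result} {P b s t : List (RunElem S)}

theorem TableWitnessed.recFail (h : TableWitnessed A w M P) (hs : MatchRun A w q i r s)
    (hP : .call q i ∈ P) : TableWitnessed A w (recFail M q i r) P := by
  intro p j hM
  cases r with
  | successAt => exact h hM
  | failure =>
    by_cases hpj : (p, j) = (q, i)
    · cases hpj
      exact ⟨hP, s, hs⟩
    · exact h (by simpa [RegexMemo.recFail, hpj] using hM)

/-- After the prefix `P`, the computation of `sub*` may replace `t` by `s`, whenever `P ++ s` is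
an initial segment of the run `P ++ s ++ Q` of `Match` which `sub*` is to produce. -/
def ExpandsAfter (A : NFA Sigma S) (w : List Sigma) (P t s : List (RunElem S)) : Prop :=
  ∀ ⦃q i r Q⦄, MatchRun A w q i r (P ++ s ++ Q) →
    ∀ R, SubStar memoToCall RunElem.isRet (P ++ s ++ R) (P ++ s ++ Q) →
      SubStar memoToCall RunElem.isRet (P ++ t ++ R) (P ++ s ++ Q)

theorem ExpandsAfter.refl : ExpandsAfter A w P s s := fun _ _ _ _ _ _ h => h

theorem ExpandsAfter.append {t' s' : List (RunElem S)} (h : ExpandsAfter A w P t s)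
    (h' : ExpandsAfter A w (P ++ s) t' s') : ExpandsAfter A w P (t ++ t') (s ++ s') := by
  intro q i r Q hT R hR
  simp only [ExpandsAfter, List.append_assoc] at h h' hT hR ⊢
  exact h hT _ (h' hT _ hR)

theorem MatchRun.expandsAfter_memo (hs : MatchRun A w q i r s) (hP : .call q i ∈ P)
    (e : RunElem S) : ExpandsAfter A w P [.memo q i, e] s := by
  intro q₀ i₀ r₀ Q hT R hR
  obtain ⟨P₁, P₂, hsplit, hfirst⟩ := hT.exists_first_run hs hP
  obtain ⟨b, rfl, hb⟩ := hs.exists_balanced_body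
  have hmemo : ∀ a ∈ P, memoToCall a = none := fun a ha =>
    hT.memoToCall_eq_none a (List.mem_append_left _ (List.mem_append_left _ ha))
  exact hR.expand_first hsplit rfl hb rfl r.isRet_elem hfirst hmemo

theorem MatchRun.exists_expansion_of_body (hs : MatchRun A w q i r (.call q i :: b ++ [r.elem]))
    (hM : TableWitnessed A w M (P ++ [.call q i] ++ b))
    (ht : ExpandsAfter A w (P ++ [.call q i]) t b) :
    ∃ s, MatchRun A w q i r s ∧ TableWitnessed A w (recFail M q i r) (P ++ s) ∧
      ExpandsAfter A w P (.call q i :: t ++ [r.elem]) s := by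
  refine ⟨_, hs, .recFail ?_ hs (by simp), ?_⟩
  · simpa using hM.append [r.elem]
  · exact ((ExpandsAfter.refl (s := [.call q i])).append ht).append .refl

theorem MemoRun.exists_expansion (h : MemoRun A w q i M M' r t) (hM : TableWitnessed A w M P) :
    ∃ s, MatchRun A w q i r s ∧ TableWitnessed A w M' (P ++ s) ∧ ExpandsAfter A w P t s := by
  induction h generalizing P with
  | memoHit hit =>
    obtain ⟨hcall, s, hs⟩ := hM hit
    exact ⟨s, hs, hM.append s, hs.expandsAfter_memo hcall _⟩
  | accept _ hF => exact ⟨_, .accept hF, hM.append _, .refl⟩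
  | eps _ hF hT _ ih =>
    obtain ⟨s, hs, hM', hexp⟩ := ih (hM.append _)
    exact (MatchRun.eps hF hT hs).exists_expansion_of_body hM' hexp
  | branchSucc _ hF hT _ ih =>
    obtain ⟨s, hs, hM', hexp⟩ := ih (hM.append _)
    exact (MatchRun.branchSucc hF hT hs).exists_expansion_of_body hM' hexp
  | branchFail _ hF hT _ _ ih ih' =>
    obtain ⟨s, hs, hM', hexp⟩ := ih (hM.append _)
    obtain ⟨s', hs', hM'', hexp'⟩ := ih' hM'
    exact (MatchRun.branchFail hF hT hs hs').exists_expansion_of_body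
      (by simpa using hM'') (hexp.append hexp')
  | charSucc _ hF hT hw _ ih =>
    obtain ⟨s, hs, hM', hexp⟩ := ih (hM.append _)
    exact (MatchRun.charSucc hF hT hw hs).exists_expansion_of_body hM' hexp
  | charFail _ hF hT hw =>
    exact (MatchRun.charFail hF hT hw).exists_expansion_of_body (b := [])
      ((hM.append _).append _) .refl

end MemoRun

theorem memo_run_expansion_general {Sigma S : Type} [DecidableEq S] {A : NFA Sigma S}
    {w : List Sigma} {q : S} {i : ℕ} {r : Result} {s : List (RunElem S)}
    (hmatch : MatchRun A w q i r s)
    {M' : S × ℕ → Bool} {r' : Result} {s' : List (RunElem S)}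
    (hmemo : MemoRun A w q i (fun _ => false) M' r' s') :
    SubStar memoToCall RunElem.isRet s' s := by
  have hM₀ : TableWitnessed A w (fun _ => false) [] := by simp [TableWitnessed]
  obtain ⟨s₀, hs₀, -, hexp⟩ := hmemo.exists_expansion hM₀
  obtain ⟨-, rfl⟩ := hmatch.unique hs₀
  have hdone := SubStar.of_forall_eq_none (isRet := RunElem.isRet) hmatch.memoToCall_eq_none
  simpa using hexp (Q := []) (by simpa using hmatch) [] (by simpa using hdone)

/-- **Lemma 6** (run expansion relates `Memo` to `Match`): for every NFA `A` without
ε-loops, every input string `w`, and every position `i ∈ {0, …, |w|}`, if `s` is the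
run of `Match_{A,w}(q0, i)` and `s'` is the run of `Memo^{M0}_{A,w}(q0, i)`, then
`s = sub*(s')`. -/
theorem memo_run_expansion {Sigma S : Type} [Fintype S] [DecidableEq S]
    (A : NFA Sigma S) (hLoop : A.NoEpsLoops)
    (w : List Sigma) (i : ℕ) (hi : i ≤ w.length)
    {r : Result} {s : List (RunElem S)}
    (hmatch : MatchRun A w A.q0 i r s)
    {M' : S × ℕ → Bool} {r' : Result} {s' : List (RunElem S)}
    (hmemo : MemoRun A w A.q0 i (fun _ => false) M' r' s') :
    SubStar memoToCall RunElem.isRet s' s :=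
  memo_run_expansion_general hmatch hmemo

end RegexMemo
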